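/- If π/4 ≤ α ≤ 78π/180, 83π/180 ≤ β ≤ 97π/180, and the parameter tuple (x₁,y₁,α,x₂,y₂,β) satisfies condition K₂, then μ(x₁,y₁,α,x₂,y₂,β) ≥ (1/6)·((1/2)·cos(α − β + π/12) + cos(α − π/4)). -/

import Mathlib

open Real MeasureTheory

noncomputable def pt (x y : ℝ) : EuclideanSpace ℝ (Fin 2) :=
  (WithLp.equiv 2 (Fin 2 → ℝ)).symm ![x, y]

noncomputable def sqVertex (x y a : ℝ) (k : Fin 4) : EuclideanSpace ℝ (Fin 2) :=
  pt (x + Real.sqrt 2 / 6 * Real.cos (a + ((k : ℕ) : ℝ) * (Real.pi / 2)))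
     (y + Real.sqrt 2 / 6 * Real.sin (a + ((k : ℕ) : ℝ) * (Real.pi / 2)))

noncomputable def triVertex (x y b : ℝ) (k : Fin 3) : EuclideanSpace ℝ (Fin 2) :=
  pt (x + Real.sqrt 3 / 6 * Real.cos (b + ((k : ℕ) : ℝ) * (2 * Real.pi / 3)))
     (y + Real.sqrt 3 / 6 * Real.sin (b + ((k : ℕ) : ℝ) * (2 * Real.pi / 3)))

noncomputable def config (x1 y1 a x2 y2 b : ℝ) : Set (EuclideanSpace ℝ (Fin 2)) :=
  {pt 0 0, pt 1 0} ∪ Set.range (sqVertex x1 y1 a) ∪ Set.range (triVertex x2 y2 b)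

noncomputable def area (x1 y1 a x2 y2 b : ℝ) : ℝ :=
  (volume (convexHull ℝ (config x1 y1 a x2 y2 b))).toReal

noncomputable def segEF : Set (EuclideanSpace ℝ (Fin 2)) := segment ℝ (pt 0 0) (pt 1 0)

def K2 (x1 y1 a x2 y2 b : ℝ) : Prop :=
  (∀ p ∈ convexHull ℝ (Set.range (sqVertex x1 y1 a)) ∪
        convexHull ℝ (Set.range (triVertex x2 y2 b)),
      Metric.infDist p segEF ≤ 1 ∧ p 1 ∈ Set.Icc (-0.46 : ℝ) 0.46) ∧
  (convexHull ℝ (Set.range (sqVertex x1 y1 a)) ∩ segEF).Nonempty ∧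
  (convexHull ℝ (Set.range (triVertex x2 y2 b)) ∩ segEF).Nonempty


/-- A line in the plane is a null set. -/
lemma line_null (c d e : ℝ) (h : c ≠ 0 ∨ d ≠ 0) :
    volume {p : Fin 2 → ℝ | c * p 0 + d * p 1 = e} = 0 := by
  obtain ⟨q, hq⟩ : ∃ q : Fin 2 → ℝ, c * q 0 + d * q 1 = e := by
    rcases h with h | h
    · exact ⟨![e / c, 0], by simp; field_simp⟩
    · exact ⟨![0, e / d], by simp; field_simp⟩
  let f : (Fin 2 → ℝ) →ₗ[ℝ] ℝ := c • LinearMap.proj 0 + d • LinearMap.proj 1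
  have hf : ∀ p, f p = c * p 0 + d * p 1 := fun p => by simp [f]
  have hker : LinearMap.ker f ≠ ⊤ := by
    intro ht
    have h1 : ∀ p, f p = 0 := fun p => by
      have : p ∈ LinearMap.ker f := by rw [ht]; trivial
      simpa using this
    rcases h with h | h
    · have := h1 ![1, 0]
      rw [hf] at this; simp at this; exact h this
    · have := h1 ![0, 1]
      rw [hf] at this; simp at this; exact h this
  have h0 := Measure.addHaar_submodule (volume : Measure (Fin 2 → ℝ)) _ hker
  rw [← measure_preimage_add_right volume (-q)] at h0
  convert h0 using 2
  ext p
  simp only [Set.mem_ofPred_eq, Set.mem_preimage, SetLike.mem_coe, LinearMap.mem_ker, hf,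
    Pi.add_apply, Pi.neg_apply]
  constructor <;> intro h <;> linarith

lemma sep_disj (c d e : ℝ) (h : c ≠ 0 ∨ d ≠ 0) {U V : Set (Fin 2 → ℝ)}
    (hU : ∀ p ∈ U, c * p 0 + d * p 1 ≤ e) (hV : ∀ p ∈ V, e ≤ c * p 0 + d * p 1) :
    AEDisjoint volume U V := by
  refine measure_mono_null ?_ (line_null c d e h)
  rintro p ⟨h1, h2⟩
  exact le_antisymm (hU p h1) (hV p h2)

/-- The closed triangle with given vertices. -/
def tri (P Q R : Fin 2 → ℝ) : Set (Fin 2 → ℝ) := convexHull ℝ {P, Q, R}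

lemma tri_sub {K : Set (Fin 2 → ℝ)} (hK : Convex ℝ K) {P Q R : Fin 2 → ℝ}
    (hP : P ∈ K) (hQ : Q ∈ K) (hR : R ∈ K) : tri P Q R ⊆ K := by
  apply convexHull_min _ hK
  rintro x (rfl | rfl | rfl) <;> assumption

lemma tri_meas (P Q R : Fin 2 → ℝ) : MeasurableSet (tri P Q R) := by
  apply IsClosed.measurableSet
  apply IsCompact.isClosed
  exact (Set.toFinite _).isCompact_convexHull ℝ

lemma half_convex (c d e : ℝ) : Convex ℝ {p : Fin 2 → ℝ | c * p 0 + d * p 1 ≤ e} := by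
  intro p hp q hq s t hs ht hst
  simp only [Set.mem_ofPred_eq, Pi.add_apply, Pi.smul_apply, smul_eq_mul] at *
  calc _ = s * (c * p 0 + d * p 1) + t * (c * q 0 + d * q 1) := by ring
    _ ≤ s * e + t * e := by gcongr
    _ = e := by rw [← add_mul, hst, one_mul]

lemma tri_le (c d e : ℝ) {P Q R : Fin 2 → ℝ} (hP : c * P 0 + d * P 1 ≤ e)
    (hQ : c * Q 0 + d * Q 1 ≤ e) (hR : c * R 0 + d * R 1 ≤ e) :
    ∀ p ∈ tri P Q R, c * p 0 + d * p 1 ≤ e :=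
  fun _ hp => tri_sub (half_convex c d e) hP hQ hR hp

lemma tri_ge (c d e : ℝ) {P Q R : Fin 2 → ℝ} (hP : e ≤ c * P 0 + d * P 1)
    (hQ : e ≤ c * Q 0 + d * Q 1) (hR : e ≤ c * R 0 + d * R 1) :
    ∀ p ∈ tri P Q R, e ≤ c * p 0 + d * p 1 := by
  intro p hp
  have := tri_le (-c) (-d) (-e) (P := P) (Q := Q) (R := R)
    (by linarith) (by linarith) (by linarith) p hp
  linarith

lemma tri_mem (P Q R : Fin 2 → ℝ) (s t : ℝ) (hs : 0 ≤ s) (ht : 0 ≤ t) (hst : s + t ≤ 1) :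
    P + s • (Q - P) + t • (R - P) ∈ tri P Q R := by
  have hc : Convex ℝ (tri P Q R) := convex_convexHull ℝ _
  have hP : P ∈ tri P Q R := subset_convexHull ℝ _ (by simp)
  have hQ : Q ∈ tri P Q R := subset_convexHull ℝ _ (by simp)
  have hR : R ∈ tri P Q R := subset_convexHull ℝ _ (by simp)
  have := hc.sum_mem (t := Finset.univ) (w := ![1 - s - t, s, t]) (z := ![P, Q, R])
    (by intro i _; fin_cases i <;> simp <;> linarith)
    (by simp [Fin.sum_univ_three]; ring)
    (by intro i _; fin_cases i <;> simpa)
  convert this using 1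
  simp [Fin.sum_univ_three]
  module

/-- Area of a triangle (lower bound): half the determinant. -/
lemma tri_vol (P Q R : Fin 2 → ℝ) :
    ENNReal.ofReal (|(Q 0 - P 0) * (R 1 - P 1) - (Q 1 - P 1) * (R 0 - P 0)| / 2)
      ≤ volume (tri P Q R) := by
  set D := (Q 0 - P 0) * (R 1 - P 1) - (Q 1 - P 1) * (R 0 - P 0) with hD
  let M : Matrix (Fin 2) (Fin 2) ℝ := !![Q 0 - P 0, R 0 - P 0; Q 1 - P 1, R 1 - P 1]
  have hdet : LinearMap.det (Matrix.toLin' M) = D := by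
    rw [LinearMap.det_toLin', Matrix.det_fin_two]; simp [M, hD]; ring
  have hbox : volume (Set.Icc (0 : Fin 2 → ℝ) 1) = 1 := by
    rw [Real.volume_Icc_pi]; simp
  have himg := Measure.addHaar_image_linearMap (volume : Measure (Fin 2 → ℝ))
    (Matrix.toLin' M) (Set.Icc 0 1)
  rw [hdet, hbox, mul_one] at himg
  have hsub : (Matrix.toLin' M) '' (Set.Icc 0 1) ⊆
      (fun p => p + P) ⁻¹' (tri P Q R) ∪ (fun p => (Q + R - P) - p) ⁻¹' (tri P Q R) := by
    rintro _ ⟨z, ⟨hz0, hz1⟩, rfl⟩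
    have h00 := hz0 0
    have h01 := hz0 1
    have h10 := hz1 0
    have h11 := hz1 1
    simp only [Pi.zero_apply, Pi.one_apply] at h00 h01 h10 h11
    by_cases h : z 0 + z 1 ≤ 1
    · left
      have := tri_mem P Q R (z 0) (z 1) h00 h01 h
      simp only [Set.mem_preimage]
      convert this using 1
      ext i
      fin_cases i <;> simp [M, dotProduct, Fin.sum_univ_two] <;> ring
    · right
      have := tri_mem P Q R (1 - z 0) (1 - z 1) (by linarith) (by linarith) (by linarith)
      simp only [Set.mem_preimage]
      convert this using 1
      ext i
      fin_cases i <;> simp [M, dotProduct, Fin.sum_univ_two] <;> ring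
  have h1 := (measure_mono (μ := volume) hsub).trans (measure_union_le _ _)
  rw [himg, measure_preimage_add_right,
    (Measure.measurePreserving_sub_left volume (Q + R - P)).measure_preimage
      (tri_meas P Q R).nullMeasurableSet] at h1
  have h2 : ENNReal.ofReal |D| ≤ 2 * volume (tri P Q R) := by
    rw [two_mul]
    exact h1
  rw [ENNReal.ofReal_div_of_pos two_pos]
  apply ENNReal.div_le_of_le_mul'
  simpa using h2

/-- Separation of the two caps at a corner. -/
lemma corner_sep (a1 a2 f1 f2 : ℝ) (ha : 0 ≤ a2) (hf : 0 ≤ f1) (h1 : a1 ≤ f1) (h2 : f2 ≤ a2) :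
    ∃ c d : ℝ, (c ≠ 0 ∨ d ≠ 0) ∧ 0 ≤ c ∧ 0 ≤ d ∧ c * a1 - d * a2 ≤ 0 ∧ 0 ≤ c * f1 - d * f2 := by
  by_cases h : 0 < a1
  · refine ⟨a2, a1, Or.inr h.ne', ha, h.le, by linarith [mul_comm a1 a2], ?_⟩
    nlinarith [mul_le_mul_of_nonneg_left h1 ha, mul_le_mul_of_nonneg_left h2 h.le]
  · exact ⟨1, 0, Or.inl one_ne_zero, zero_le_one, le_rfl, by linarith, by linarith⟩

/-- A compact convex set containing an axis-parallel square of side `l` and having widths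
at least `W` and `H` has area at least `l * (W + H) / 2`. -/
lemma core {K : Set (Fin 2 → ℝ)} (hK : Convex ℝ K) (hc : IsCompact K) (x y l : ℝ) (hl : 0 < l)
    (h00 : ![x, y] ∈ K) (h10 : ![x + l, y] ∈ K) (h01 : ![x, y + l] ∈ K)
    (h11 : ![x + l, y + l] ∈ K) {E F A B : Fin 2 → ℝ} (hE : E ∈ K) (hF : F ∈ K) (hA : A ∈ K)
    (hB : B ∈ K) :
    ENNReal.ofReal (l / 2 * ((F 0 - E 0) + (A 1 - B 1))) ≤ volume K := by
  have hne : K.Nonempty := ⟨_, hE⟩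
  obtain ⟨T, hT, hTm⟩ := hc.exists_isMaxOn hne (f := fun p => p 1) (by fun_prop)
  obtain ⟨D, hD, hDm⟩ := hc.exists_isMinOn hne (f := fun p => p 1) (by fun_prop)
  obtain ⟨R, hR, hRm⟩ := hc.exists_isMaxOn hne (f := fun p => p 0) (by fun_prop)
  obtain ⟨L, hL, hLm⟩ := hc.exists_isMinOn hne (f := fun p => p 0) (by fun_prop)
  rw [isMaxOn_iff] at hTm hRm
  rw [isMinOn_iff] at hDm hLm
  have hT1 := hTm _ h01
  have hD1 := hDm _ h00
  have hR1 := hRm _ h10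
  have hL1 := hLm _ h00
  simp only [Matrix.cons_val_zero, Matrix.cons_val_one] at hT1 hD1 hR1 hL1
  set Q : Set (Fin 2 → ℝ) := Set.Icc ![x, y] ![x + l, y + l] with hQdef
  set CT := tri ![x + l, y + l] ![x, y + l] T with hCT
  set CD := tri ![x, y] ![x + l, y] D with hCD
  set CR := tri ![x + l, y] ![x + l, y + l] R with hCR
  set CL := tri ![x, y + l] ![x, y] L with hCL
  have sT : CT ⊆ K := tri_sub hK h11 h01 hT
  have sD : CD ⊆ K := tri_sub hK h00 h10 hD
  have sR : CR ⊆ K := tri_sub hK h10 h11 hR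
  have sL : CL ⊆ K := tri_sub hK h01 h00 hL
  have hQb : ∀ p ∈ Q, x ≤ p 0 ∧ p 0 ≤ x + l ∧ y ≤ p 1 ∧ p 1 ≤ y + l := by
    rintro p ⟨h1, h2⟩
    exact ⟨by simpa using h1 0, by simpa using h2 0, by simpa using h1 1, by simpa using h2 1⟩
  have sQ : Q ⊆ K := by
    intro p hp
    obtain ⟨a1, a2, a3, a4⟩ := hQb p hp
    set s := (p 0 - x) / l with hs
    set t := (p 1 - y) / l with ht
    have hp0 : p 0 = x + s * l := by rw [hs]; field_simp; ring
    have hp1 : p 1 = y + t * l := by rw [ht]; field_simp; ring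
    have s0 : 0 ≤ s := div_nonneg (by linarith) hl.le
    have t0 : 0 ≤ t := div_nonneg (by linarith) hl.le
    have s1 : s ≤ 1 := by rw [hs, div_le_one hl]; linarith
    have t1 : t ≤ 1 := by rw [ht, div_le_one hl]; linarith
    have b0 := hK h00 h10 (sub_nonneg.2 s1) s0 (by ring)
    have b1 := hK h01 h11 (sub_nonneg.2 s1) s0 (by ring)
    have b2 := hK b0 b1 (sub_nonneg.2 t1) t0 (by ring)
    convert b2 using 1
    ext i
    fin_cases i
    · simp [hp0]; ring
    · simp [hp1]; ring
  have p1 := mul_nonneg hl.le (sub_nonneg.2 hT1)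
  have p2 := mul_nonneg hl.le (sub_nonneg.2 hD1)
  have p3 := mul_nonneg hl.le (sub_nonneg.2 hR1)
  have p4 := mul_nonneg hl.le (sub_nonneg.2 hL1)
  have vT := tri_vol ![x + l, y + l] ![x, y + l] T
  have vD := tri_vol ![x, y] ![x + l, y] D
  have vR := tri_vol ![x + l, y] ![x + l, y + l] R
  have vL := tri_vol ![x, y + l] ![x, y] L
  simp only [Matrix.cons_val_zero, Matrix.cons_val_one] at vT vD vR vL
  rw [show (x - (x + l)) * (T 1 - (y + l)) - (y + l - (y + l)) * (T 0 - (x + l))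
    = -(l * (T 1 - (y + l))) by ring, abs_neg, abs_of_nonneg p1] at vT
  rw [show (x + l - x) * (D 1 - y) - (y - y) * (D 0 - x) = -(l * (y - D 1)) by ring,
    abs_neg, abs_of_nonneg p2] at vD
  rw [show (x + l - (x + l)) * (R 1 - y) - (y + l - y) * (R 0 - (x + l))
    = -(l * (R 0 - (x + l))) by ring, abs_neg, abs_of_nonneg p3] at vR
  rw [show (x - x) * (L 1 - (y + l)) - (y - (y + l)) * (L 0 - x) = -(l * (x - L 0)) by ring,
    abs_neg, abs_of_nonneg p4] at vL
  have vQ : volume Q = ENNReal.ofReal (l * l) := by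
    rw [hQdef, Real.volume_Icc_pi]
    simp [Fin.prod_univ_two, ENNReal.ofReal_mul hl.le]
  -- disjointness
  have dTD : AEDisjoint volume CD CT := by
    refine sep_disj 0 1 y (by simp) (tri_le _ _ _ ?_ ?_ ?_) (tri_ge _ _ _ ?_ ?_ ?_) <;>
      simp <;> linarith
  have dLR : AEDisjoint volume CL CR := by
    refine sep_disj 1 0 x (by simp) (tri_le _ _ _ ?_ ?_ ?_) (tri_ge _ _ _ ?_ ?_ ?_) <;>
      simp <;> linarith
  have dQT : AEDisjoint volume Q CT := by
    refine sep_disj 0 1 (y + l) (by simp) (fun p hp => ?_) (tri_ge _ _ _ ?_ ?_ ?_)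
    · linarith [hQb p hp]
    all_goals simp <;> linarith
  have dQR : AEDisjoint volume Q CR := by
    refine sep_disj 1 0 (x + l) (by simp) (fun p hp => ?_) (tri_ge _ _ _ ?_ ?_ ?_)
    · linarith [hQb p hp]
    all_goals simp <;> linarith
  have dQD : AEDisjoint volume Q CD := by
    refine (sep_disj 0 1 y (by simp) (tri_le _ _ _ ?_ ?_ ?_) (fun p hp => ?_)).symm
    rotate_right
    · linarith [hQb p hp]
    all_goals simp <;> linarith
  have dQL : AEDisjoint volume Q CL := by
    refine (sep_disj 1 0 x (by simp) (tri_le _ _ _ ?_ ?_ ?_) (fun p hp => ?_)).symm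
    rotate_right
    · linarith [hQb p hp]
    all_goals simp <;> linarith
  have dTR : AEDisjoint volume CT CR := by
    obtain ⟨c, d, hcd, c0, d0, i1, i2⟩ := corner_sep (T 0 - (x + l)) (T 1 - (y + l))
      (R 0 - (x + l)) (R 1 - (y + l)) (by linarith) (by linarith)
      (by linarith [hRm _ hT]) (by linarith [hTm _ hR])
    have := mul_nonneg c0 hl.le
    have := mul_nonneg d0 hl.le
    refine sep_disj c (-d) (c * (x + l) - d * (y + l)) (by simpa using hcd)
      (tri_le _ _ _ ?_ ?_ ?_) (tri_ge _ _ _ ?_ ?_ ?_) <;> (try simp) <;> linarith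
  have dTL : AEDisjoint volume CT CL := by
    obtain ⟨c, d, hcd, c0, d0, i1, i2⟩ := corner_sep (x - T 0) (T 1 - (y + l))
      (x - L 0) (L 1 - (y + l)) (by linarith) (by linarith)
      (by linarith [hLm _ hT]) (by linarith [hTm _ hL])
    have := mul_nonneg c0 hl.le
    have := mul_nonneg d0 hl.le
    refine sep_disj (-c) (-d) (-c * x - d * (y + l)) (by simpa using hcd)
      (tri_le _ _ _ ?_ ?_ ?_) (tri_ge _ _ _ ?_ ?_ ?_) <;> (try simp) <;> linarith
  have dDR : AEDisjoint volume CD CR := by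
    obtain ⟨c, d, hcd, c0, d0, i1, i2⟩ := corner_sep (D 0 - (x + l)) (y - D 1)
      (R 0 - (x + l)) (y - R 1) (by linarith) (by linarith)
      (by linarith [hRm _ hD]) (by linarith [hDm _ hR])
    have := mul_nonneg c0 hl.le
    have := mul_nonneg d0 hl.le
    refine sep_disj c d (c * (x + l) + d * y) (by simpa using hcd)
      (tri_le _ _ _ ?_ ?_ ?_) (tri_ge _ _ _ ?_ ?_ ?_) <;> (try simp) <;> linarith
  have dDL : AEDisjoint volume CD CL := by
    obtain ⟨c, d, hcd, c0, d0, i1, i2⟩ := corner_sep (x - D 0) (y - D 1)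
      (x - L 0) (y - L 1) (by linarith) (by linarith)
      (by linarith [hLm _ hD]) (by linarith [hDm _ hL])
    have := mul_nonneg c0 hl.le
    have := mul_nonneg d0 hl.le
    refine sep_disj (-c) d (-c * x + d * y) (by simpa using hcd)
      (tri_le _ _ _ ?_ ?_ ?_) (tri_ge _ _ _ ?_ ?_ ?_) <;> (try simp) <;> linarith
  have mT : NullMeasurableSet CT volume := (tri_meas _ _ _).nullMeasurableSet
  have mD : NullMeasurableSet CD volume := (tri_meas _ _ _).nullMeasurableSet
  have mR : NullMeasurableSet CR volume := (tri_meas _ _ _).nullMeasurableSet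
  have mL : NullMeasurableSet CL volume := (tri_meas _ _ _).nullMeasurableSet
  have hsub : (((Q ∪ CT) ∪ CD) ∪ CR) ∪ CL ⊆ K :=
    Set.union_subset (Set.union_subset (Set.union_subset (Set.union_subset sQ sT) sD) sR) sL
  have e1 : volume ((((Q ∪ CT) ∪ CD) ∪ CR) ∪ CL) =
      volume Q + volume CT + volume CD + volume CR + volume CL := by
    rw [measure_union₀ mL, measure_union₀ mR, measure_union₀ mD, measure_union₀ mT dQT]
    · exact dQD.union_left dTD.symm
    · exact (dQR.union_left dTR).union_left dDR
    · exact ((dQL.union_left dTL).union_left dDL).union_left dLR.symm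
  refine le_trans ?_ (measure_mono hsub)
  rw [e1]
  refine le_trans ?_ (add_le_add (add_le_add (add_le_add (add_le_add vQ.ge vT) vD) vR) vL)
  rw [← ENNReal.ofReal_add, ← ENNReal.ofReal_add, ← ENNReal.ofReal_add, ← ENNReal.ofReal_add]
  · apply ENNReal.ofReal_le_ofReal
    have q1 := mul_le_mul_of_nonneg_left (hTm _ hA) hl.le
    have q2 := mul_le_mul_of_nonneg_left (hDm _ hB) hl.le
    have q3 := mul_le_mul_of_nonneg_left (hRm _ hF) hl.le
    have q4 := mul_le_mul_of_nonneg_left (hLm _ hE) hl.le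
    linarith
  all_goals nlinarith [mul_pos hl hl]

/-- Rotation by `-θ`, from the Euclidean plane to coordinates. -/
noncomputable def rotc (θ : ℝ) : EuclideanSpace ℝ (Fin 2) →ₗ[ℝ] (Fin 2 → ℝ) :=
  (Matrix.toLin' !![cos θ, sin θ; -sin θ, cos θ]).comp
    (WithLp.linearEquiv 2 ℝ (Fin 2 → ℝ)).toLinearMap

lemma rotc_pt (θ x y : ℝ) :
    rotc θ (pt x y) = ![cos θ * x + sin θ * y, -sin θ * x + cos θ * y] := by
  ext i
  fin_cases i <;> simp [rotc, pt, Matrix.mulVec, dotProduct, Fin.sum_univ_two]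

lemma rotc_polar (θ x y r t : ℝ) :
    rotc θ (pt (x + r * cos t) (y + r * sin t)) =
      ![cos θ * x + sin θ * y + r * cos (t - θ), -sin θ * x + cos θ * y + r * sin (t - θ)] := by
  rw [rotc_pt, cos_sub, sin_sub]
  ext i
  fin_cases i <;> simp <;> ring

lemma rotc_vol (θ : ℝ) (K : Set (EuclideanSpace ℝ (Fin 2))) :
    volume (rotc θ '' K) = volume K := by
  have h1 : rotc θ '' K = (Matrix.toLin' !![cos θ, sin θ; -sin θ, cos θ]) ''
      ((MeasurableEquiv.toLp 2 (Fin 2 → ℝ)) ⁻¹' K) := by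
    rw [rotc, LinearMap.coe_comp, Set.image_comp]
    congr 1
    ext z
    constructor
    · rintro ⟨w, hw, rfl⟩
      simpa using hw
    · intro hz
      exact ⟨WithLp.toLp 2 z, hz, rfl⟩
  rw [h1, Measure.addHaar_image_linearMap, LinearMap.det_toLin', Matrix.det_fin_two]
  have h2 : |cos θ * cos θ + sin θ * sin θ| = 1 := by
    rw [show cos θ * cos θ + sin θ * sin θ = 1 by nlinarith [sin_sq_add_cos_sq θ], abs_one]
  simp [h2]
  exact (EuclideanSpace.volume_preserving_symm_measurableEquiv_toLp (Fin 2)).symm.measure_preimage_equiv K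

theorem second_inequality (x1 y1 a x2 y2 b : ℝ)
    (ha : Real.pi / 4 ≤ a) (ha' : a ≤ 78 * Real.pi / 180)
    (hb : 83 * Real.pi / 180 ≤ b) (hb' : b ≤ 97 * Real.pi / 180)
    (hK2 : K2 x1 y1 a x2 y2 b) :
    area x1 y1 a x2 y2 b ≥
      1 / 6 * (1 / 2 * Real.cos (a - b + Real.pi / 12) + Real.cos (a - Real.pi / 4)) := by
  set X := config x1 y1 a x2 y2 b with hX
  have hfin : X.Finite := by
    rw [hX, config]
    exact ((Set.toFinite _).union (Set.finite_range _)).union (Set.finite_range _)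
  have hcpt : IsCompact (convexHull ℝ X) := hfin.isCompact_convexHull ℝ
  set θ := a - π / 4 with hθ
  have hK : Convex ℝ (rotc θ '' convexHull ℝ X) := (convex_convexHull ℝ X).linear_image _
  have hc : IsCompact (rotc θ '' convexHull ℝ X) :=
    hcpt.image (LinearMap.continuous_of_finiteDimensional _)
  have mem : ∀ p ∈ X, rotc θ p ∈ rotc θ '' convexHull ℝ X := fun p hp =>
    Set.mem_image_of_mem _ (subset_convexHull ℝ X hp)
  have mE := mem (pt 0 0) (by simp [hX, config])
  have mF := mem (pt 1 0) (by simp [hX, config])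
  have mS : ∀ k, rotc θ (sqVertex x1 y1 a k) ∈ rotc θ '' convexHull ℝ X := fun k =>
    mem _ (by simp [hX, config])
  have mT : ∀ k, rotc θ (triVertex x2 y2 b k) ∈ rotc θ '' convexHull ℝ X := fun k =>
    mem _ (by simp [hX, config])
  have s0 := mS 0
  have s1 := mS 1
  have s2 := mS 2
  have s3 := mS 3
  have t0 := mT 0
  have t2 := mT 2
  rw [sqVertex, rotc_polar] at s0 s1 s2 s3
  rw [triVertex, rotc_polar] at t0 t2
  rw [rotc_pt] at mE mF
  set u := cos θ * x1 + sin θ * y1 with hu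
  set v := -sin θ * x1 + cos θ * y1 with hv
  have hsq : √2 * √2 = 2 := Real.mul_self_sqrt (by norm_num)
  have hsq3 : √3 * √3 = 3 := Real.mul_self_sqrt (by norm_num)
  have g0 : a + (((0 : Fin 4) : ℕ) : ℝ) * (π / 2) - θ = π / 4 := by simp [hθ]
  have g1 : a + (((1 : Fin 4) : ℕ) : ℝ) * (π / 2) - θ = π / 4 + π / 2 := by simp [hθ]; ring
  have g2 : a + (((2 : Fin 4) : ℕ) : ℝ) * (π / 2) - θ = π / 4 + π := by simp [hθ]; ring
  have g3 : a + (((3 : Fin 4) : ℕ) : ℝ) * (π / 2) - θ = π / 4 + π / 2 + π := by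
    simp [hθ]; ring
  rw [g0, cos_pi_div_four, sin_pi_div_four] at s0
  rw [g1, cos_add_pi_div_two, sin_add_pi_div_two, cos_pi_div_four, sin_pi_div_four] at s1
  rw [g2, cos_add_pi, sin_add_pi, cos_pi_div_four, sin_pi_div_four] at s2
  rw [g3, cos_add_pi, sin_add_pi, cos_add_pi_div_two, sin_add_pi_div_two, cos_pi_div_four,
    sin_pi_div_four] at s3
  have r1 : √2 / 6 * (√2 / 2) = 1 / 6 := by linarith
  have hcv : ∀ p q p' q' : ℝ, ![p, q] ∈ rotc θ '' convexHull ℝ X → p = p' → q = q' →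
      ![p', q'] ∈ rotc θ '' convexHull ℝ X := by
    rintro p q p' q' h rfl rfl
    exact h
  have key := core hK hc (u - 1 / 6) (v - 1 / 6) (1 / 3) (by norm_num)
    (hcv _ _ _ _ s2 (by linarith) (by linarith)) (hcv _ _ _ _ s3 (by linarith) (by linarith))
    (hcv _ _ _ _ s1 (by linarith) (by linarith)) (hcv _ _ _ _ s0 (by linarith) (by linarith)) mE mF t0 t2
  rw [rotc_vol] at key
  have hfinite : volume (convexHull ℝ X) ≠ ⊤ := hcpt.measure_lt_top.ne
  have key2 := (ENNReal.ofReal_le_iff_le_toReal hfinite).1 key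
  rw [area]
  refine ge_iff_le.2 (le_trans (le_of_eq ?_) key2)
  have w0 : b + (((0 : Fin 3) : ℕ) : ℝ) * (2 * π / 3) - θ = (π / 2 - π / 6) - (a - b + π / 12) := by
    simp [hθ]; ring
  have w2 : b + (((2 : Fin 3) : ℕ) : ℝ) * (2 * π / 3) - θ
      = (π / 2 + π / 6) + π - (a - b + π / 12) := by
    simp [hθ]; ring
  rw [w0, w2]
  simp only [Matrix.cons_val_zero, Matrix.cons_val_one]
  rw [sin_sub (π / 2 - π / 6), sin_sub (π / 2 + π / 6 + π), sin_add_pi, cos_add_pi, sin_pi_div_two_sub, cos_pi_div_two_sub,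
    add_comm (π / 2) (π / 6), sin_add_pi_div_two, cos_add_pi_div_two, cos_pi_div_six,
    sin_pi_div_six]
  linear_combination (-(1 / 36) * cos (a - b + π / 12)) * hsq3
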